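/- Let A be a local ring whose residue field has at least four elements, let I be a proper ideal of A and set R := A/I. Then the natural homomorphism Γ₀(I) → R^×, (a b; c d) ↦ a mod I, is surjective and its kernel is exactly the commutator subgroup [Γ₀(I), Γ₀(I)]; consequently H₁(Γ₀(I), ℤ) ≅ R^×. -/

import Mathlib

/-!
If `u` and `u ^ 2 - 1` are units, then `⁅diag(u, u⁻¹), E₁₂(x)⁆ = E₁₂((u ^ 2 - 1) x)` and
`⁅diag(u⁻¹, u), E₂₁(y)⁆ = E₂₁((u ^ 2 - 1) y)` show that all elementary matrices in `Γ₀(I)` are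
commutators. A matrix in `Γ₀(I)` whose upper left entry is a unit congruent to `1` modulo `I` is a
product of four elementary matrices of `Γ₀(I)`. If the upper left entry `a` is congruent to `1`
but is not a unit, then `a` is coprime to `b * c`, where `c ∈ I`, and the stable range condition
yields a unit `a + t * (b * c)`, which is the upper left entry after multiplication by
`E₂₁(t * c)`. Hence the kernel of `Γ₀(I) → (A ⧸ I)ˣ` consists of products of commutators.

In degree `1` the bar complex has only cycles, since its differential `C₁ → C₀` vanishes, and the
boundary of `[a|b]` is `[b] - [a * b] + [a]`; so `H₁` is the abelianization.
-/

noncomputable section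

namespace GroupHomology

variable (κ : Type*) [CommRing κ] (G : Type*) [Group G]

/-- The group of `n`-chains of the (inhomogeneous) bar complex of `G` with coefficients
in `κ`: the free `κ`-module on `n`-tuples of elements of `G`. -/
abbrev Ch (n : ℕ) : Type _ := (Fin n → G) →₀ κ

variable {G}

/-- The `i`-th face of an `(n+1)`-tuple (`0 ≤ i ≤ n+1`): drop the first entry (`i = 0`),
drop the last entry (`i = n+1`), or multiply two consecutive entries. -/
def face {n : ℕ} (i : ℕ) (g : Fin (n + 1) → G) : Fin n → G := fun m =>
  if ((m : ℕ) + 1 : ℕ) < i then g m.castSucc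
  else if ((m : ℕ) + 1 : ℕ) = i then g m.castSucc * g m.succ
  else g m.succ

variable (G)

/-- The value of the bar differential on a basis element. -/
def dfun {n : ℕ} (g : Fin (n + 1) → G) : Ch κ G n :=
  ∑ i ∈ Finset.range (n + 2), ((-1 : κ) ^ i) • Finsupp.single (face i g) (1 : κ)

/-- The differential of the bar complex. -/
def dd (n : ℕ) : Ch κ G (n + 1) →ₗ[κ] Ch κ G n :=
  Finsupp.linearCombination κ (dfun κ G)

/-- The cycles of the bar complex (`Z_0` is everything). -/
def cycles : (n : ℕ) → Submodule κ (Ch κ G n)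
  | 0 => ⊤
  | (n + 1) => LinearMap.ker (dd κ G n)

/-- The quotient of `n`-chains by `n`-boundaries. -/
abbrev ChQ (n : ℕ) : Type _ := Ch κ G n ⧸ LinearMap.range (dd κ G n)

/-- The `n`-th homology of `G` with coefficients in `κ`: cycles modulo boundaries,
realized as the image of the cycles in the quotient of chains by boundaries. -/
def Hsub (n : ℕ) : Submodule κ (ChQ κ G n) :=
  Submodule.map (LinearMap.range (dd κ G n)).mkQ (cycles κ G n)

/-- The `n`-th homology of `G` with coefficients in `κ`. -/
abbrev H (n : ℕ) : Type _ := ↥(Hsub κ G n)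

/-- The homology class of a cycle. -/
def hcl {n : ℕ} (x : Ch κ G n) (hx : x ∈ cycles κ G n) : H κ G n :=
  ⟨Submodule.Quotient.mk x, Submodule.mem_map_of_mem hx⟩

variable {G} {G' : Type*} [Group G']

/-- The chain map induced by a group homomorphism. -/
def chmap (f : G →* G') (n : ℕ) : Ch κ G n →ₗ[κ] Ch κ G' n :=
  Finsupp.lmapDomain κ κ (fun g => (f : G → G') ∘ g)

lemma face_comp (f : G →* G') {n : ℕ} (i : ℕ) (g : Fin (n + 1) → G) :
    face i ((f : G → G') ∘ g) = (f : G → G') ∘ face i g := by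
  funext m
  simp only [Function.comp_apply]
  unfold face
  by_cases h1 : ((m : ℕ) + 1 : ℕ) < i
  · simp [h1]
  · by_cases h2 : ((m : ℕ) + 1 : ℕ) = i
    · simp [h1, h2, map_mul]
    · simp [h1, h2]

lemma chmap_single (f : G →* G') {n : ℕ} (g : Fin n → G) (c : κ) :
    chmap κ f n (Finsupp.single g c) = Finsupp.single ((f : G → G') ∘ g) c := by
  simp [chmap, Finsupp.lmapDomain_apply, Finsupp.mapDomain_single]

lemma dd_single {n : ℕ} (g : Fin (n + 1) → G) :
    dd κ G n (Finsupp.single g 1) = dfun κ G g := by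
  simp [dd, Finsupp.linearCombination_single]

lemma chmap_comm (f : G →* G') (n : ℕ) :
    (dd κ G' n) ∘ₗ (chmap κ f (n + 1)) = (chmap κ f n) ∘ₗ (dd κ G n) := by
  refine Finsupp.lhom_ext' (fun g => LinearMap.ext_ring ?_)
  simp only [LinearMap.comp_apply, Finsupp.lsingle_apply]
  rw [chmap_single, dd_single, dd_single]
  unfold dfun
  rw [map_sum]
  refine Finset.sum_congr rfl (fun i _ => ?_)
  rw [map_smul, chmap_single, face_comp]

lemma chmap_comm_apply (f : G →* G') (n : ℕ) (x : Ch κ G (n + 1)) :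
    dd κ G' n (chmap κ f (n + 1) x) = chmap κ f n (dd κ G n x) :=
  DFunLike.congr_fun (chmap_comm κ f n) x

lemma chmap_cycles (f : G →* G') (n : ℕ) {x : Ch κ G n} (hx : x ∈ cycles κ G n) :
    chmap κ f n x ∈ cycles κ G' n := by
  cases n with
  | zero => trivial
  | succ n =>
      simp only [cycles, LinearMap.mem_ker] at hx ⊢
      rw [chmap_comm_apply, hx, map_zero]

/-- The map induced on the quotients of chains by boundaries. -/
def chqmap (f : G →* G') (n : ℕ) : ChQ κ G n →ₗ[κ] ChQ κ G' n :=
  Submodule.mapQ _ _ (chmap κ f n)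
    (by
      rintro x ⟨y, hy⟩
      exact ⟨chmap κ f (n + 1) y, by rw [← hy, chmap_comm_apply]⟩)

/-- The map induced on homology by a group homomorphism. -/
def Hmap (f : G →* G') (n : ℕ) : H κ G n →ₗ[κ] H κ G' n :=
  (chqmap κ f n).restrict (p := Hsub κ G n) (q := Hsub κ G' n)
    (by
      rintro x ⟨y, hy, rfl⟩
      exact ⟨chmap κ f n y, chmap_cycles κ f n hy, rfl⟩)

lemma Hmap_hcl (f : G →* G') (n : ℕ) (x : Ch κ G n) (hx : x ∈ cycles κ G n) :
    Hmap κ f n (hcl κ G x hx) = hcl κ G' (chmap κ f n x) (chmap_cycles κ f n hx) := rfl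


/-- The 2-chain `[(s|t)] - [(t|s)]` is a cycle when `s` and `t` commute. -/
lemma pont_mem_cycles {s t : G} (h : s * t = t * s) :
    (Finsupp.single ![s, t] (1 : κ) - Finsupp.single ![t, s] 1) ∈ cycles κ G 2 := by
  have hc : cycles κ G 2 = LinearMap.ker (dd κ G 1) := rfl
  rw [hc, LinearMap.mem_ker, map_sub, dd_single, dd_single]
  have key : ∀ a b : G, dfun κ G ![a, b] =
      Finsupp.single ![b] 1 - Finsupp.single ![a * b] 1 + Finsupp.single ![a] 1 := by
    intro a b
    have f0 : face 0 ![a, b] = ![b] := by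
      funext m; fin_cases m; simp [face]
    have f1 : face 1 ![a, b] = ![a * b] := by
      funext m; fin_cases m; simp [face]
    have f2 : face 2 ![a, b] = ![a] := by
      funext m; fin_cases m; simp [face]
    unfold dfun
    rw [show (1 : ℕ) + 2 = 3 from rfl, Finset.sum_range_succ, Finset.sum_range_succ,
      Finset.sum_range_one, f0, f1, f2]
    simp only [pow_zero, pow_one, one_smul]
    module
  rw [key, key, h]
  abel

/-- The Pontryagin (pontrjagin) product `c(s,t) ∈ H₂(G)` of two commuting elements of `G`:
the image of the canonical generator of `H₂(ℤ²)` under `(m,n) ↦ s^m t^n`,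
i.e. the class of the cycle `[(s|t)] - [(t|s)]`. -/
def pontryagin (s t : G) (h : s * t = t * s) : H κ G 2 :=
  hcl κ G _ (pont_mem_cycles κ h)

end GroupHomology

/-- `SL₂(R)`. -/
abbrev SL2 (R : Type*) [CommRing R] : Type _ := Matrix.SpecialLinearGroup (Fin 2) R

/-- The congruence subgroup `Γ₀(I) = { (a b; c d) ∈ SL₂(A) : c ∈ I }`. -/
def Gamma0 {A : Type*} [CommRing A] (I : Ideal A) : Subgroup (SL2 A) where
  carrier := { g | (g : Matrix (Fin 2) (Fin 2) A) 1 0 ∈ I }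
  one_mem' := by
    simp only [Set.mem_setOf_eq, Matrix.SpecialLinearGroup.coe_one]
    rw [Matrix.one_apply_ne (by decide)]
    exact I.zero_mem
  mul_mem' := by
    intro a b ha hb
    simp only [Set.mem_setOf_eq, Matrix.SpecialLinearGroup.coe_mul] at *
    rw [Matrix.mul_apply, Fin.sum_univ_two]
    exact I.add_mem (I.mul_mem_right _ ha) (I.mul_mem_left _ hb)
  inv_mem' := by
    intro a ha
    simp only [Set.mem_setOf_eq] at *
    rw [Matrix.SpecialLinearGroup.coe_inv, Matrix.adjugate_fin_two]
    simpa using I.neg_mem ha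

private lemma conj_mul_aux {M : Type*} [Monoid M] (m mi x y : M) (h : mi * m = 1) :
    m * (x * y) * mi = (m * x * mi) * (m * y * mi) := by
  have : (m * x * mi) * (m * y * mi) = m * (x * (y * mi)) := by
    simp only [mul_assoc]
    rw [← mul_assoc mi m (y * mi), h, one_mul]
  rw [this]
  simp [mul_assoc]

/-- Conjugation by an invertible `2 × 2`-matrix, as an endomorphism of `SL₂(R)`. -/
def conjSL {R : Type*} [CommRing R] (M : GL (Fin 2) R) : SL2 R →* SL2 R where
  toFun X := ⟨(M : Matrix (Fin 2) (Fin 2) R) * (X : Matrix (Fin 2) (Fin 2) R) *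
      ((M⁻¹ : GL (Fin 2) R) : Matrix (Fin 2) (Fin 2) R), by
    rw [show ((M⁻¹ : GL (Fin 2) R) : Matrix (Fin 2) (Fin 2) R)
        = (↑M : Matrix (Fin 2) (Fin 2) R)⁻¹ from Matrix.coe_units_inv M,
      Matrix.det_conj M.isUnit, X.2]⟩
  map_one' := by
    apply Subtype.ext
    have h : (M : Matrix (Fin 2) (Fin 2) R) * ((M⁻¹ : GL (Fin 2) R) : Matrix (Fin 2) (Fin 2) R)
        = 1 := by
      rw [← Units.val_mul, mul_inv_cancel, Units.val_one]
    simp only [Matrix.SpecialLinearGroup.coe_one, mul_one, Matrix.SpecialLinearGroup.coe_mk]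
    exact h
  map_mul' X Y := by
    apply Subtype.ext
    have h : ((M⁻¹ : GL (Fin 2) R) : Matrix (Fin 2) (Fin 2) R) *
        (M : Matrix (Fin 2) (Fin 2) R) = 1 := by
      rw [← Units.val_mul, inv_mul_cancel, Units.val_one]
    simp only [Matrix.SpecialLinearGroup.coe_mul, Matrix.SpecialLinearGroup.coe_mk]
    exact conj_mul_aux _ _ _ _ h

/-- The diagonal matrix `diag(u, 1)` as an element of `GL₂(R)`. -/
def diagU {R : Type*} [CommRing R] (u : Rˣ) : GL (Fin 2) R where
  val := !![(u : R), 0; 0, 1]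
  inv := !![((u⁻¹ : Rˣ) : R), 0; 0, 1]
  val_inv := by
    ext i j
    fin_cases i <;> fin_cases j <;>
      simp [Matrix.mul_apply, Fin.sum_univ_two, Matrix.one_apply]
  inv_val := by
    ext i j
    fin_cases i <;> fin_cases j <;>
      simp [Matrix.mul_apply, Fin.sum_univ_two, Matrix.one_apply]

/-- The diagonal matrix `diag(a, a⁻¹)` as an element of `SL₂(R)`. -/
def diagSL {R : Type*} [CommRing R] (a : Rˣ) : SL2 R :=
  ⟨!![(a : R), 0; 0, ((a⁻¹ : Rˣ) : R)], by
    rw [Matrix.det_fin_two_of]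
    simp⟩

lemma mem_Gamma0 {A : Type*} [CommRing A] {I : Ideal A} {g : SL2 A} :
    g ∈ Gamma0 I ↔ (g : Matrix (Fin 2) (Fin 2) A) 1 0 ∈ I := Iff.rfl

lemma diagSL_comm {R : Type*} [CommRing R] (a b : Rˣ) :
    diagSL a * diagSL b = diagSL b * diagSL a := by
  apply Subtype.ext
  show ((diagSL a : SL2 R) : Matrix (Fin 2) (Fin 2) R) * (diagSL b : SL2 R)
      = ((diagSL b : SL2 R) : Matrix (Fin 2) (Fin 2) R) * (diagSL a : SL2 R)
  unfold diagSL
  ext i j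
  fin_cases i <;> fin_cases j <;>
    simp [Matrix.mul_apply, Fin.sum_univ_two] <;> ring

lemma diagSL_mem_Gamma0 {A : Type*} [CommRing A] (I : Ideal A) (a : Aˣ) :
    diagSL a ∈ Gamma0 I := by
  rw [mem_Gamma0]
  have h : ((diagSL a : SL2 A) : Matrix (Fin 2) (Fin 2) A) 1 0 = 0 := by
    unfold diagSL; simp
  rw [h]; exact I.zero_mem

/-- The antidiagonal matrix `g_π = (0 -1; w 0)` as an element of `GL₂(F)`,
for a unit `w`. -/
def gpiU {F : Type*} [CommRing F] (w : Fˣ) : GL (Fin 2) F where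
  val := !![0, -1; (w : F), 0]
  inv := !![0, ((w⁻¹ : Fˣ) : F); -1, 0]
  val_inv := by
    ext i j
    fin_cases i <;> fin_cases j <;>
      simp [Matrix.mul_apply, Fin.sum_univ_two, Matrix.one_apply]
  inv_val := by
    ext i j
    fin_cases i <;> fin_cases j <;>
      simp [Matrix.mul_apply, Fin.sum_univ_two, Matrix.one_apply]

section FirstHomology

open GroupHomology

lemma dd_zero_eq_zero (κ G : Type*) [CommRing κ] [Group G] : dd κ G 0 = 0 := by
  refine Finsupp.lhom_ext' fun g => LinearMap.ext_ring ?_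
  have hface : face 1 g = face 0 g := Subsingleton.elim _ _
  simp [dd_single, dfun, Finset.sum_range_succ, hface]

lemma dd_one_single (κ : Type*) {G : Type*} [CommRing κ] [Group G] (g : Fin 2 → G) :
    dd κ G 1 (Finsupp.single g 1) =
      Finsupp.single ![g 1] 1 - Finsupp.single ![g 0 * g 1] 1 + Finsupp.single ![g 0] 1 := by
  have face_zero : face 0 g = ![g 1] := by ext m; fin_cases m; simp [face]
  have face_one : face 1 g = ![g 0 * g 1] := by ext m; fin_cases m; simp [face]
  have face_two : face 2 g = ![g 0] := by ext m; fin_cases m; simp [face]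
  simp [dd_single, dfun, Finset.sum_range_succ, face_zero, face_one, face_two, sub_eq_add_neg]

lemma Hsub_one_eq_top (κ G : Type*) [CommRing κ] [Group G] : Hsub κ G 1 = ⊤ := by
  have hcycles : cycles κ G 1 = ⊤ := LinearMap.ker_eq_top.2 (dd_zero_eq_zero κ G)
  rw [Hsub, hcycles, Submodule.map_top, Submodule.range_mkQ]

variable (G : Type*) [Group G]

/-- The homomorphism `g ↦ [g]` from `G` to the `1`-chains of its bar complex modulo boundaries. -/
def barClass : G →* Multiplicative (ChQ ℤ G 1) :=
  MonoidHom.mk' (fun g => .ofAdd (Submodule.Quotient.mk (Finsupp.single ![g] 1))) fun a b => by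
    rw [← ofAdd_add, ← Submodule.Quotient.mk_add]
    refine congrArg Multiplicative.ofAdd ((Submodule.Quotient.eq _).2 ?_).symm
    refine ⟨Finsupp.single ![a, b] 1, ?_⟩
    simp only [dd_one_single, Matrix.cons_val_zero, Matrix.cons_val_one]
    abel

/-- The map from `1`-chains modulo boundaries to the abelianization which sends the class of the
basis element `[g]` to the class of `g`. -/
def chQToAbelianization : ChQ ℤ G 1 →ₗ[ℤ] Additive (Abelianization G) :=
  Submodule.liftQ _
    (Finsupp.linearCombination ℤ fun v : Fin 1 → G => .ofMul (Abelianization.of (v 0))) <| by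
    rw [LinearMap.range_le_ker_iff]
    refine Finsupp.lhom_ext' fun g => LinearMap.ext_ring ?_
    simp [dd_one_single]

lemma chQToAbelianization_mk_single (v : Fin 1 → G) :
    chQToAbelianization G (Submodule.Quotient.mk (Finsupp.single v 1)) =
      .ofMul (Abelianization.of (v 0)) := by
  simp [chQToAbelianization]

/-- The `1`-chains of the bar complex modulo boundaries form the abelianization of the group. -/
def chQEquivAbelianization : ChQ ℤ G 1 ≃ₗ[ℤ] Additive (Abelianization G) :=
  LinearEquiv.ofLinearMap (chQToAbelianization G)
    (MonoidHom.toAdditiveLeft (Abelianization.lift (barClass G))).toIntLinearMap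
    (LinearMap.ext fun x => QuotientGroup.induction_on x fun g =>
      chQToAbelianization_mk_single G ![g])
    (by
      refine Submodule.linearMap_qext _ <| Finsupp.lhom_ext' fun v => LinearMap.ext_ring ?_
      have hv : ![v 0] = v := by ext m; fin_cases m; rfl
      simp [chQToAbelianization_mk_single, barClass, hv])

/-- The first integral homology of a group is its abelianization. -/
def hOneEquivAbelianization : H ℤ G 1 ≃+ Additive (Abelianization G) :=
  ((LinearEquiv.ofTop _ (Hsub_one_eq_top ℤ G)).trans (chQEquivAbelianization G)).toAddEquiv

end FirstHomology

/-- The isomorphism from the abelianization induced by a surjection whose kernel is the commutator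
subgroup. -/
def abelianizationEquivOfKerEq {G Q : Type*} [Group G] [Group Q] (f : G →* Q)
    (hf : Function.Surjective f) (hker : f.ker = commutator G) : Abelianization G ≃* Q :=
  (QuotientGroup.quotientMulEquivOfEq hker.symm).trans
    (QuotientGroup.quotientKerEquivOfSurjective f hf)

section StableRange

variable {A : Type*} [CommRing A]

/-- The relative stable range one condition for an ideal `I`: whenever `a` is coprime to an
element `c` of `I`, some `a + t * c` is a unit. It is how locality of `A` enters the argument, but
it also holds for every ideal contained in the Jacobson radical of a commutative ring. -/
def HasStableRangeOne (I : Ideal A) : Prop :=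
  ∀ ⦃a c : A⦄, c ∈ I → IsCoprime a c → ∃ t, IsUnit (a + t * c)

lemma hasStableRangeOne_of_isLocalRing [IsLocalRing A] (I : Ideal A) : HasStableRangeOne I := by
  intro a c _ hac
  by_cases ha : IsUnit a
  · exact ⟨0, by simpa using ha⟩
  · obtain ⟨r, s, hrs⟩ := hac
    have hsc : IsUnit (s * c) := (IsLocalRing.isUnit_or_isUnit_of_add_one hrs).resolve_left
      (mt isUnit_of_mul_isUnit_right ha)
    obtain ⟨v, rfl⟩ := isUnit_of_mul_isUnit_right hsc
    exact ⟨(1 - a) * ↑v⁻¹, by simp⟩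

lemma HasStableRangeOne.unitsMap_mk_surjective {I : Ideal A} (hI : HasStableRangeOne I) :
    Function.Surjective (Units.map (Ideal.Quotient.mk I : A →* A ⧸ I)) := by
  intro r
  obtain ⟨a, ha⟩ := Ideal.Quotient.mk_surjective (r : A ⧸ I)
  obtain ⟨s, hs⟩ := Ideal.Quotient.mk_surjective (↑r⁻¹ : A ⧸ I)
  have hmem : a * s - 1 ∈ I := by
    rw [← Ideal.Quotient.eq, map_mul, ha, hs, map_one, Units.mul_inv]
  have hcoprime : IsCoprime a (a * s - 1) := ⟨s, -1, by ring⟩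
  obtain ⟨t, v, hv⟩ := hI hmem hcoprime
  refine ⟨v, Units.ext ?_⟩
  have hzero : Ideal.Quotient.mk I (t * (a * s - 1)) = 0 :=
    Ideal.Quotient.eq_zero_iff_mem.2 (I.mul_mem_left t hmem)
  change Ideal.Quotient.mk I v = r
  rw [hv, map_add, hzero, add_zero, ha]

end StableRange

section ResidueField

lemma exists_sq_ne_one_of_four_le_card {K : Type*} [Ring K] [NoZeroDivisors K]
    (hK : 4 ≤ Nat.card K ∨ Infinite K) : ∃ x : K, x ≠ 0 ∧ x ^ 2 ≠ 1 := by
  classical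
  by_contra! h
  have hmem (x : K) : x ∈ ({0, 1, -1} : Finset K) := by
    by_cases hx : x = 0
    · simp [hx]
    · simpa [hx] using sq_eq_one_iff.1 (h x hx)
  have : Fintype K := ⟨_, hmem⟩
  have hle : Nat.card K ≤ 3 := by
    rw [Nat.card_eq_fintype_card]
    exact (Finset.card_le_card fun x _ => hmem x).trans Finset.card_le_three
  rcases hK with hcard | hinf
  · omega
  · exact not_finite K

lemma exists_unit_isUnit_sq_sub_one {A : Type*} [CommRing A] [IsLocalRing A]
    (hA : 4 ≤ Nat.card (IsLocalRing.ResidueField A) ∨ Infinite (IsLocalRing.ResidueField A)) :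
    ∃ u : Aˣ, IsUnit ((u : A) ^ 2 - 1) := by
  obtain ⟨x, hx_zero, hx_sq⟩ := exists_sq_ne_one_of_four_le_card hA
  obtain ⟨a, rfl⟩ := IsLocalRing.residue_surjective x
  obtain ⟨u, rfl⟩ := (IsLocalRing.residue_ne_zero_iff_isUnit a).1 hx_zero
  refine ⟨u, (IsLocalRing.residue_ne_zero_iff_isUnit _).1 ?_⟩
  rwa [map_sub, map_pow, map_one, sub_ne_zero]

end ResidueField

namespace Gamma0

open scoped commutatorElement

variable {A : Type*} [CommRing A] {I : Ideal A}

/-- The elementary matrix `E₁₂(x)` as an element of `Γ₀(I)`. -/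
def upper (I : Ideal A) (x : A) : Gamma0 I :=
  ⟨⟨!![1, x; 0, 1], by simp⟩, I.zero_mem⟩

/-- The elementary matrix `E₂₁(y)`, for `y ∈ I`, as an element of `Γ₀(I)`. -/
def lower (y : I) : Gamma0 I :=
  ⟨⟨!![1, 0; (y : A), 1], by simp⟩, y.2⟩

/-- The diagonal matrix `diag(u, u⁻¹)` as an element of `Γ₀(I)`. -/
def diag (I : Ideal A) (u : Aˣ) : Gamma0 I :=
  ⟨diagSL u, diagSL_mem_Gamma0 I u⟩

lemma coe_upper (x : A) :
    ((upper I x : SL2 A) : Matrix (Fin 2) (Fin 2) A) = !![1, x; 0, 1] := rfl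

lemma coe_lower (y : I) :
    ((lower y : SL2 A) : Matrix (Fin 2) (Fin 2) A) = !![1, 0; (y : A), 1] := rfl

lemma coe_diag (u : Aˣ) :
    ((diag I u : SL2 A) : Matrix (Fin 2) (Fin 2) A) = !![(u : A), 0; 0, ↑u⁻¹] := rfl

lemma coe_mul (X Y : Gamma0 I) :
    ((X * Y : Gamma0 I).1 : Matrix (Fin 2) (Fin 2) A) = X.1 * Y.1 := rfl

lemma ext {X Y : Gamma0 I} (h : (X.1 : Matrix (Fin 2) (Fin 2) A) = Y.1) : X = Y :=
  Subtype.ext (Subtype.ext h)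

lemma commutator_diag_upper (u : Aˣ) (x : A) :
    ⁅diag I u, upper I x⁆ = upper I (((u : A) ^ 2 - 1) * x) := by
  rw [commutatorElement_def, mul_inv_eq_iff_eq_mul, mul_inv_eq_iff_eq_mul]
  apply Gamma0.ext
  simp only [coe_mul, coe_diag, coe_upper, Matrix.mul_fin_two]
  congrm !![?_, ?_; ?_, ?_]
  · ring
  · linear_combination (-(u : A) * x) * u.mul_inv
  · ring
  · ring

lemma commutator_diag_inv_lower (u : Aˣ) (y : I) :
    ⁅diag I u⁻¹, lower y⁆ = lower (((u : A) ^ 2 - 1) • y) := by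
  rw [commutatorElement_def, mul_inv_eq_iff_eq_mul, mul_inv_eq_iff_eq_mul]
  apply Gamma0.ext
  simp only [coe_mul, coe_diag, coe_lower, Matrix.mul_fin_two, inv_inv, Submodule.coe_smul,
    smul_eq_mul]
  congrm !![?_, ?_; ?_, ?_]
  · ring
  · ring
  · linear_combination (-(u : A) * y) * u.mul_inv
  · ring

lemma upper_mem_commutator {u : Aˣ} (hu : IsUnit ((u : A) ^ 2 - 1)) (x : A) :
    upper I x ∈ commutator (Gamma0 I) := by
  obtain ⟨v, hv⟩ := hu
  have hx : ⁅diag I u, upper I (↑v⁻¹ * x)⁆ = upper I x := by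
    rw [commutator_diag_upper, ← hv, Units.mul_inv_cancel_left]
  rw [← hx]
  exact Subgroup.commutator_mem_commutator (Subgroup.mem_top _) (Subgroup.mem_top _)

lemma lower_mem_commutator {u : Aˣ} (hu : IsUnit ((u : A) ^ 2 - 1)) (y : I) :
    lower y ∈ commutator (Gamma0 I) := by
  obtain ⟨v, hv⟩ := hu
  have hy : ⁅diag I u⁻¹, lower ((↑v⁻¹ : A) • y)⁆ = lower y := by
    rw [commutator_diag_inv_lower, ← hv, smul_smul, Units.mul_inv, one_smul]
  rw [← hy]
  exact Subgroup.commutator_mem_commutator (Subgroup.mem_top _) (Subgroup.mem_top _)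

lemma det_eq_one (X : Gamma0 I) : X.1 0 0 * X.1 1 1 - X.1 0 1 * X.1 1 0 = 1 := by
  rw [← Matrix.det_fin_two, X.1.det_coe]

lemma exists_eq_lower_mul_upper_mul_lower_mul_upper (X : Gamma0 I) (hunit : IsUnit (X.1 0 0))
    (hone : X.1 0 0 - 1 ∈ I) :
    ∃ (y z : I) (x w : A), X = lower y * upper I x * lower z * upper I w := by
  obtain ⟨a, ha⟩ := hunit
  have hy : (X.1 1 0 - (X.1 0 0 - 1)) * ↑a⁻¹ ∈ I := I.mul_mem_right _ (I.sub_mem X.2 hone)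
  refine ⟨⟨_, hy⟩, ⟨_, hone⟩, 1, (X.1 0 1 - 1) * ↑a⁻¹, Gamma0.ext ?_⟩
  have hdet := det_eq_one X
  have hinv : X.1 0 0 * ↑a⁻¹ = 1 := by rw [← ha, a.mul_inv]
  refine (Matrix.eta_fin_two _).trans ?_
  simp only [coe_mul, coe_lower, coe_upper, Matrix.mul_fin_two]
  congrm !![?_, ?_; ?_, ?_]
  · ring
  · linear_combination (1 - X.1 0 1) * hinv
  · linear_combination (X.1 0 0 - 1 - X.1 1 0) * hinv
  · linear_combination ↑a⁻¹ * hdet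
      - (X.1 1 1 + (X.1 1 0 - (X.1 0 0 - 1)) * ↑a⁻¹ * (X.1 0 1 - 1) - 1) * hinv

lemma mem_commutator_of_isUnit {u : Aˣ} (hu : IsUnit ((u : A) ^ 2 - 1)) {X : Gamma0 I}
    (hunit : IsUnit (X.1 0 0)) (hone : X.1 0 0 - 1 ∈ I) : X ∈ commutator (Gamma0 I) := by
  obtain ⟨y, z, x, w, rfl⟩ := exists_eq_lower_mul_upper_mul_lower_mul_upper X hunit hone
  exact mul_mem (mul_mem (mul_mem (lower_mem_commutator hu y) (upper_mem_commutator hu x))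
    (lower_mem_commutator hu z)) (upper_mem_commutator hu w)

lemma mul_lower_apply_zero_zero (X : Gamma0 I) (y : I) :
    (X * lower y).1 0 0 = X.1 0 0 + X.1 0 1 * y := by
  simp [coe_lower, Matrix.mul_apply]

lemma mem_commutator_of_sub_one_mem (hI : HasStableRangeOne I) {u : Aˣ}
    (hu : IsUnit ((u : A) ^ 2 - 1)) {X : Gamma0 I} (hone : X.1 0 0 - 1 ∈ I) :
    X ∈ commutator (Gamma0 I) := by
  have hcoprime : IsCoprime (X.1 0 0) (X.1 0 1 * X.1 1 0) :=
    ⟨X.1 1 1, -1, by linear_combination det_eq_one X⟩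
  obtain ⟨t, ht⟩ := hI (I.mul_mem_left _ X.2) hcoprime
  let y : I := t • ⟨X.1 1 0, X.2⟩
  have hentry : (X * lower y).1 0 0 = X.1 0 0 + t * (X.1 0 1 * X.1 1 0) := by
    rw [mul_lower_apply_zero_zero]
    simp only [y, SetLike.val_smul, smul_eq_mul]
    ring
  have hXy : X * lower y ∈ commutator (Gamma0 I) := by
    refine mem_commutator_of_isUnit hu (hentry ▸ ht) ?_
    rw [mul_lower_apply_zero_zero, add_sub_right_comm]
    exact I.add_mem hone (I.mul_mem_left _ y.2)
  exact (Subgroup.mul_mem_cancel_right _ (lower_mem_commutator hu y)).1 hXy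

end Gamma0

theorem stmt15_general {A : Type*} [CommRing A] (hA : ∃ u : Aˣ, IsUnit ((u : A) ^ 2 - 1))
    (I : Ideal A) (hI : HasStableRangeOne I) (f : Gamma0 I →* (A ⧸ I)ˣ)
    (hf : ∀ X : Gamma0 I, (f X : A ⧸ I) = Ideal.Quotient.mk I (X.1 0 0)) :
    Function.Surjective f ∧ f.ker = commutator (Gamma0 I) ∧
      Nonempty (GroupHomology.H ℤ (Gamma0 I) 1 ≃+ Additive (A ⧸ I)ˣ) := by
  obtain ⟨u, hu⟩ := hA
  have hsurj : Function.Surjective f := by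
    intro r
    obtain ⟨a, rfl⟩ := hI.unitsMap_mk_surjective r
    exact ⟨Gamma0.diag I a, Units.ext (hf _)⟩
  have hker : f.ker = commutator (Gamma0 I) := by
    refine le_antisymm (fun X hX => ?_) (Abelianization.commutator_subset_ker f)
    refine Gamma0.mem_commutator_of_sub_one_mem hI hu ?_
    rw [← Ideal.Quotient.eq, ← hf, MonoidHom.mem_ker.1 hX, Units.val_one, map_one]
  exact ⟨hsurj, hker, ⟨(hOneEquivAbelianization (Gamma0 I)).trans
    (abelianizationEquivOfKerEq f hsurj hker).toAdditive⟩⟩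

/-- Let `A` be a local ring whose residue field has at least four elements, `I` a proper ideal,
`R := A/I`.  The natural homomorphism `Γ₀(I) → R^×`, `(a b; c d) ↦ a mod I`, is surjective
with kernel exactly the commutator subgroup of `Γ₀(I)`;  consequently `H₁(Γ₀(I), ℤ) ≅ R^×`. -/
theorem stmt15
    (A : Type) [CommRing A] [IsLocalRing A]
    (hcard : 4 ≤ Nat.card (IsLocalRing.ResidueField A) ∨
      Infinite (IsLocalRing.ResidueField A))
    (I : Ideal A) (hI : I ≠ ⊤)
    (f : ↥(Gamma0 I) →* (A ⧸ I)ˣ)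
    (hf : ∀ X : ↥(Gamma0 I),
      ((f X : (A ⧸ I)ˣ) : A ⧸ I) =
        Ideal.Quotient.mk I (((X : SL2 A) : Matrix (Fin 2) (Fin 2) A) 0 0)) :
    Function.Surjective f ∧ f.ker = commutator ↥(Gamma0 I) ∧
      Nonempty (GroupHomology.H ℤ ↥(Gamma0 I) 1 ≃+ Additive (A ⧸ I)ˣ) := by
  exact stmt15_general (exists_unit_isUnit_sq_sub_one hcard) I
    (hasStableRangeOne_of_isLocalRing I) f hf
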